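/- arXiv:nlin/0607056 — 3 statements merged into one kernel-verified Lean document; each statement's English description precedes it below -/
import Mathlib

section
/- Let n ≥ 1 and let Y₁, …, Y_{2n} be real random variables on a probability space (Ω, P) which are jointly centered Gaussian, meaning every real linear combination Σᵢ cᵢ Yᵢ has a centered Gaussian law. Then the product Y₁⋯Y_{2n} is integrable and E[Y₁ Y₂ ⋯ Y_{2n}] = Σ_σ Π_{i : i < σ(i)} E[Y_i Y_{σ(i)}], where the sum ranges over all permutations σ of {1, …, 2n} with σ∘σ = id and σ(i) ≠ i for every i (complete Feynman diagrams, i.e. pairings), and the product is over the n pairs {i, σ(i)} with i < σ(i). -/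
open MeasureTheory ProbabilityTheory

namespace Wick

/-! ### One-dimensional Gaussian moments -/

lemma gaussian_rec (v : NNReal) (n : ℕ) (t : ℝ) :
    ∫ x, x ^ (n + 2) * Real.exp (t * x) ∂(gaussianReal 0 v) =
      v * t * (∫ x, x ^ (n + 1) * Real.exp (t * x) ∂(gaussianReal 0 v)) +
        (n + 1) * v * ∫ x, x ^ n * Real.exp (t * x) ∂(gaussianReal 0 v) := by
  have hd : ∀ (n : ℕ) (t : ℝ), HasDerivAt
      (fun t => ∫ x, x ^ n * Real.exp (t * x) ∂(gaussianReal 0 v))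
      (∫ x, x ^ (n + 1) * Real.exp (t * x) ∂(gaussianReal 0 v)) t := by
    intro n t
    have := hasDerivAt_integral_pow_mul_exp_real (X := id) (μ := gaussianReal 0 v) (t := t)
      (by rw [integrableExpSet_id_gaussianReal]; simp) n
    simpa using this
  have h0 : ∀ t : ℝ, ∫ x, x ^ 0 * Real.exp (t * x) ∂(gaussianReal 0 v)
      = Real.exp (v * t ^ 2 / 2) := by
    intro t
    have := congrFun (mgf_id_gaussianReal (μ := 0) (v := v)) t
    simpa [mgf] using this
  have h1 : ∀ t : ℝ, ∫ x, x ^ (0 + 1) * Real.exp (t * x) ∂(gaussianReal 0 v)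
      = v * t * ∫ x, x ^ 0 * Real.exp (t * x) ∂(gaussianReal 0 v) := by
    intro t
    have e1 := hd 0 t
    have e2 : HasDerivAt (fun t : ℝ => Real.exp (v * t ^ 2 / 2))
        (Real.exp (v * t ^ 2 / 2) * (v * (2 * t) / 2)) t := by
      have := ((((hasDerivAt_id t).pow 2).const_mul (v : ℝ)).div_const 2).exp
      simpa using this
    have e3 : (fun t : ℝ => ∫ x, x ^ 0 * Real.exp (t * x) ∂(gaussianReal 0 v)) =
        fun t => Real.exp (v * t ^ 2 / 2) := funext h0
    rw [e3] at e1
    rw [e1.unique e2, h0]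
    ring
  induction n generalizing t with
  | zero =>
    have e1 := hd (0 + 1) t
    have e2 : HasDerivAt (fun t : ℝ => v * t * ∫ x, x ^ 0 * Real.exp (t * x) ∂(gaussianReal 0 v))
      _ t := ((hasDerivAt_id t).const_mul (v : ℝ)).mul (hd 0 t)
    rw [funext h1] at e1
    have := e1.unique e2
    simp only [id] at this
    rw [show (0 + 2 : ℕ) = 0 + 1 + 1 from rfl, this]
    push_cast
    ring
  | succ n ih =>
    have e1 := hd (n + 2) t
    have e2 : HasDerivAt (fun t : ℝ =>
        v * t * (∫ x, x ^ (n + 1) * Real.exp (t * x) ∂(gaussianReal 0 v)) +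
        (n + 1) * v * ∫ x, x ^ n * Real.exp (t * x) ∂(gaussianReal 0 v))
      _ t := (((hasDerivAt_id t).const_mul (v : ℝ)).mul (hd (n + 1) t)).add
        ((hd n t).const_mul _)
    rw [funext ih] at e1
    have := e1.unique e2
    simp only [id] at this
    rw [show (n + 1 + 2 : ℕ) = n + 2 + 1 from rfl, this]
    push_cast
    ring

lemma gaussian_moment (v : NNReal) (n : ℕ) :
    ∫ x, x ^ (n + 2) ∂(gaussianReal 0 v) =
      (n + 1) * v * ∫ x, x ^ n ∂(gaussianReal 0 v) := by
  simpa using gaussian_rec v n 0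

/-! ### Linear functionals on polynomials -/

lemma hasDerivAt_pow {A : Type*} [CommRing A] [Algebra ℝ A] (L : A →ₗ[ℝ] ℝ) (a b : A)
    (m : ℕ) : ∀ (f : A) (t : ℝ), HasDerivAt (fun t : ℝ => L ((a + t • b) ^ m * f))
      (m * L ((a + t • b) ^ (m - 1) * b * f)) t := by
  induction m with
  | zero => intro f t; simpa using hasDerivAt_const t (L f)
  | succ m ih =>
    intro f t
    have e : (fun t : ℝ => L ((a + t • b) ^ (m + 1) * f)) =
        fun t : ℝ => L ((a + t • b) ^ m * (a * f)) + t * L ((a + t • b) ^ m * (b * f)) := by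
      funext s
      rw [← smul_eq_mul s, ← map_smul, ← map_add]
      congr 1
      simp only [Algebra.smul_def]
      ring
    rw [e]
    have h := (ih (a * f) t).add ((hasDerivAt_id t).mul (ih (b * f) t))
    refine HasDerivAt.congr_deriv h ?_
    have e2 : (m : ℝ) * L ((a + t • b) ^ m * b * f) =
        m * L ((a + t • b) ^ (m - 1) * b * (a * f)) +
          t * (m * L ((a + t • b) ^ (m - 1) * b * (b * f))) := by
      rcases m with _ | k
      · simp
      · rw [mul_left_comm t, ← mul_add, ← smul_eq_mul t, ← map_smul, ← map_add]
        congr 2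
        simp only [Algebra.smul_def, Nat.add_sub_cancel]
        ring
    simp only [id, one_mul]
    rw [show m + 1 - 1 = m from rfl]
    push_cast
    rw [add_mul, one_mul, e2, mul_assoc _ b f]
    ring

lemma hasDerivAt_pow_zero {A : Type*} [CommRing A] [Algebra ℝ A] (L : A →ₗ[ℝ] ℝ) (a b : A)
    (m : ℕ) (f : A) : HasDerivAt (fun t : ℝ => L ((a + t • b) ^ m * f))
      (m * L (a ^ (m - 1) * b * f)) 0 := by
  simpa using hasDerivAt_pow L a b m f 0

open MvPolynomial

variable {ι : Type*} [Fintype ι]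

/-- The linear form with coefficients `c`. -/
noncomputable def lin (c : ι → ℝ) : MvPolynomial ι ℝ := ∑ i, c i • X i

lemma lin_add (c d : ι → ℝ) (t : ℝ) : lin (c + t • d) = lin c + t • lin d := by
  simp [lin, add_smul, Finset.sum_add_distrib, Finset.smul_sum, smul_smul]

lemma lin_single [DecidableEq ι] (i : ι) : lin (Pi.single i (1 : ℝ)) = X i := by
  simp [lin, Pi.single_apply]

/-- Functionals agreeing on powers of linear forms are equal. -/
lemma functional_ext (L₁ L₂ : MvPolynomial ι ℝ →ₗ[ℝ] ℝ)
    (h : ∀ c m, L₁ (lin c ^ m) = L₂ (lin c ^ m)) (p : MvPolynomial ι ℝ) : L₁ p = L₂ p := by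
  classical
  suffices H : ∀ (c : ι → ℝ) (m : ℕ), L₁ (lin c ^ m * p) = L₂ (lin c ^ m * p) by
    simpa using H 0 0
  induction p using MvPolynomial.induction_on with
  | C a =>
    intro c m
    rw [mul_comm, ← smul_eq_C_mul, map_smul, map_smul, h]
  | add p q hp hq => intro c m; rw [mul_add, map_add, map_add, hp, hq]
  | mul_X p i hp =>
    intro c m
    have h1 := hasDerivAt_pow_zero L₁ (lin c) (X i) (m + 1) p
    have h2 := hasDerivAt_pow_zero L₂ (lin c) (X i) (m + 1) p
    have e : (fun t : ℝ => L₁ ((lin c + t • X i) ^ (m + 1) * p)) =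
        fun t : ℝ => L₂ ((lin c + t • X i) ^ (m + 1) * p) := by
      funext t
      rw [← lin_single i, ← lin_add, hp]
    rw [e] at h1
    have := h1.unique h2
    rw [Nat.add_sub_cancel] at this
    have h3 := mul_left_cancel₀ (by positivity) this
    rw [mul_comm p, ← mul_assoc]
    exact h3

lemma stein_pow (L : MvPolynomial ι ℝ →ₗ[ℝ] ℝ) (hL1 : L 1 = 1) (h0 : ∀ c, L (lin c) = 0)
    (h : ∀ (c : ι → ℝ) (m : ℕ), L (lin c ^ (m + 2)) = (m + 1) * L (lin c ^ 2) * L (lin c ^ m))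
    (c d : ι → ℝ) (m : ℕ) :
    L (lin d * lin c ^ m) = m * L (lin d * lin c) * L (lin c ^ (m - 1)) := by
  induction m using Nat.strong_induction_on with
  | _ m ih =>
  rcases m with _ | _ | m
  · simp [h0]
  · simp [hL1]
  · have d1 := hasDerivAt_pow_zero L (lin c) (lin d) (m + 3) 1
    have d2 := hasDerivAt_pow_zero L (lin c) (lin d) 2 1
    have d3 := hasDerivAt_pow_zero L (lin c) (lin d) (m + 1) 1
    have e : (fun t : ℝ => L ((lin c + t • lin d) ^ (m + 3) * 1)) =
        fun t : ℝ => ((m + 1 : ℕ) + 1) * L ((lin c + t • lin d) ^ 2 * 1) *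
          L ((lin c + t • lin d) ^ (m + 1) * 1) := by
      funext t
      simp only [mul_one, ← lin_add]
      exact h _ (m + 1)
    rw [e] at d1
    have key := d1.unique ((d2.const_mul ((m + 1 : ℕ) + 1 : ℝ)).mul d3)
    have ihm := ih m (by omega)
    have hm : L (lin c ^ (m + 1)) = m * L (lin c ^ 2) * L (lin c ^ (m - 1)) := by
      rcases m with _ | m
      · simp [h0]
      · have := h c m
        push_cast
        exact this
    simp only [mul_one, zero_smul, add_zero, Nat.add_sub_cancel, pow_one,
      show m + 3 - 1 = m + 2 from rfl, show 2 - 1 = 1 from rfl] at key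
    rw [mul_comm (lin c ^ (m + 2)), mul_comm (lin c ^ m), mul_comm (lin c) (lin d), ihm] at key
    have hpos : ((m : ℝ) + 3) ≠ 0 := by positivity
    apply mul_left_cancel₀ hpos
    push_cast at key ⊢
    rw [show m + 1 + 1 = m + 2 from rfl, key, hm]
    ring

lemma stein [DecidableEq ι] (L : MvPolynomial ι ℝ →ₗ[ℝ] ℝ) (hL1 : L 1 = 1)
    (h0 : ∀ c, L (lin c) = 0)
    (h : ∀ (c : ι → ℝ) (m : ℕ), L (lin c ^ (m + 2)) = (m + 1) * L (lin c ^ 2) * L (lin c ^ m))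
    (i : ι) (p : MvPolynomial ι ℝ) :
    L (X i * p) = L (mkDerivation ℝ (fun j => C (L (X i * X j))) p) := by
  refine functional_ext (L ∘ₗ LinearMap.mulLeft ℝ (X i))
    (L ∘ₗ (mkDerivation ℝ (fun j => C (L (X i * X j)))).toLinearMap) ?_ p
  intro c m
  have hl : mkDerivation ℝ (fun j => (C (L (X i * X j)) : MvPolynomial ι ℝ)) (lin c)
      = C (L (X i * lin c)) := by
    simp only [lin, map_sum, Finset.mul_sum, map_smul, mkDerivation_X, mul_smul_comm]
    simp [smul_eq_C_mul]
  simp only [LinearMap.comp_apply, LinearMap.mulLeft_apply, Derivation.coeFn_coe, Derivation.leibniz_pow, hl]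
  rw [map_nsmul, smul_eq_mul, mul_comm (lin c ^ (m - 1)), ← smul_eq_C_mul, map_smul,
    ← lin_single i, stein_pow L hL1 h0 h]
  simp [mul_assoc]

lemma stein_prod [DecidableEq ι] (L : MvPolynomial ι ℝ →ₗ[ℝ] ℝ) (hL1 : L 1 = 1)
    (h0 : ∀ c, L (lin c) = 0)
    (h : ∀ (c : ι → ℝ) (m : ℕ), L (lin c ^ (m + 2)) = (m + 1) * L (lin c ^ 2) * L (lin c ^ m))
    (i : ι) (S : Finset ι) :
    L (X i * ∏ j ∈ S, X j) = ∑ j ∈ S, L (X i * X j) * L (∏ k ∈ S.erase j, X k) := by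
  rw [stein L hL1 h0 h]
  have hp : ∀ D : Derivation ℝ (MvPolynomial ι ℝ) (MvPolynomial ι ℝ),
      D (∏ j ∈ S, X j) = ∑ j ∈ S, D (X j) * ∏ k ∈ S.erase j, X k := by
    intro D
    induction S using Finset.induction_on with
    | empty => simp
    | insert a S ha ih =>
      rw [Finset.prod_insert ha, Derivation.leibniz, ih, Finset.sum_insert ha,
        Finset.erase_insert ha, smul_eq_mul, smul_eq_mul, Finset.mul_sum, add_comm,
        mul_comm (∏ j ∈ S, X j)]
      congr 1
      refine Finset.sum_congr rfl fun j hj => ?_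
      have hne : a ≠ j := fun h => ha (h ▸ hj)
      rw [Finset.erase_insert_of_ne hne,
        Finset.prod_insert (fun h => ha (Finset.mem_of_mem_erase h))]
      ring
  rw [hp, map_sum]
  refine Finset.sum_congr rfl fun j _ => ?_
  rw [mkDerivation_X, ← smul_eq_C_mul, map_smul, smul_eq_mul]

/-! ### Pairings -/

/-- `σ` is a pairing of `S` (and fixes everything outside `S`). -/
def IsPairing (S : Finset ι) (σ : Equiv.Perm ι) : Prop :=
  σ * σ = 1 ∧ ∀ i, σ i ≠ i ↔ i ∈ S

lemma pairing_aux [LinearOrder ι] (S : Finset ι) (a j : ι) (ha : a ∈ S) (hj : j ∈ S)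
    (haj : a ≠ j) (τ : Equiv.Perm ι) :
    (IsPairing S (Equiv.swap a j * τ) ∧ (Equiv.swap a j * τ) a = j) ↔
      IsPairing ((S.erase a).erase j) τ := by
  unfold IsPairing
  simp only [Equiv.Perm.ext_iff, Equiv.Perm.mul_apply, Equiv.Perm.one_apply, Finset.mem_erase]
  constructor
  · rintro ⟨⟨h1, h2⟩, h3⟩
    have ta : τ a = a := by
      have := congrArg (Equiv.swap a j) h3
      simpa using this
    have tj : τ j = j := by
      have := h1 a
      rw [h3] at this
      have := congrArg (Equiv.swap a j) this
      simpa using this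
    have hx : ∀ x, x ≠ a → x ≠ j → Equiv.swap a j (τ x) = τ x := by
      intro x hxa hxj
      apply Equiv.swap_apply_of_ne_of_ne
      · intro h; exact hxa (τ.injective (h.trans ta.symm))
      · intro h; exact hxj (τ.injective (h.trans tj.symm))
    refine ⟨fun x => ?_, fun x => ?_⟩
    · by_cases hxa : x = a
      · subst hxa; rw [ta, ta]
      by_cases hxj : x = j
      · subst hxj; rw [tj, tj]
      have := h1 x
      rw [hx x hxa hxj] at this
      rwa [hx (τ x)] at this
      · intro h; exact hxa (τ.injective (h.trans ta.symm))
      · intro h; exact hxj (τ.injective (h.trans tj.symm))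
    · by_cases hxa : x = a
      · subst hxa; simp [ta]
      by_cases hxj : x = j
      · subst hxj; simp [tj]
      have := h2 x
      rw [hx x hxa hxj] at this
      simp [this, hxa, hxj]
  · rintro ⟨h1, h2⟩
    have ta : τ a = a := by by_contra h; simpa using (h2 a).1 h
    have tj : τ j = j := by by_contra h; simpa using (h2 j).1 h
    have hx : ∀ x, x ≠ a → x ≠ j → Equiv.swap a j (τ x) = τ x := by
      intro x hxa hxj
      apply Equiv.swap_apply_of_ne_of_ne
      · intro h; exact hxa (τ.injective (h.trans ta.symm))
      · intro h; exact hxj (τ.injective (h.trans tj.symm))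
    refine ⟨⟨fun x => ?_, fun x => ?_⟩, by simp [ta]⟩
    · by_cases hxa : x = a
      · subst hxa; simp [ta, tj]
      by_cases hxj : x = j
      · subst hxj; simp [ta, tj]
      rw [hx x hxa hxj, hx (τ x), h1]
      · intro h; exact hxa (τ.injective (h.trans ta.symm))
      · intro h; exact hxj (τ.injective (h.trans tj.symm))
    · by_cases hxa : x = a
      · subst hxa; simp [ta, ha, haj.symm]
      by_cases hxj : x = j
      · subst hxj; simp [tj, hj, haj]
      rw [hx x hxa hxj, h2]
      simp [hxa, hxj]

lemma pairing_prod [LinearOrder ι] (K : ι → ι → ℝ) (S : Finset ι) (a j : ι)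
    (haj : a < j) (τ : Equiv.Perm ι) (hτ : IsPairing ((S.erase a).erase j) τ) :
    ∏ i ∈ Finset.univ.filter (fun i => i < (Equiv.swap a j * τ) i),
        K i ((Equiv.swap a j * τ) i) =
      K a j * ∏ i ∈ Finset.univ.filter (fun i => i < τ i), K i (τ i) := by
  obtain ⟨h1, h2⟩ := hτ
  have ta : τ a = a := by by_contra h; simpa using (h2 a).1 h
  have tj : τ j = j := by by_contra h; simpa using (h2 j).1 h
  have hx : ∀ x, x ≠ a → x ≠ j → Equiv.swap a j (τ x) = τ x := by
    intro x hxa hxj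
    apply Equiv.swap_apply_of_ne_of_ne
    · intro h; exact hxa (τ.injective (h.trans ta.symm))
    · intro h; exact hxj (τ.injective (h.trans tj.symm))
  have hf : Finset.univ.filter (fun i => i < (Equiv.swap a j * τ) i) =
      insert a (Finset.univ.filter (fun i => i < τ i)) := by
    ext x
    simp only [Finset.mem_filter, Finset.mem_univ, true_and, Finset.mem_insert]
    rw [Equiv.Perm.mul_apply]
    by_cases hxa : x = a
    · subst hxa; simp [ta, haj]
    by_cases hxj : x = j
    · subst hxj; simp [tj, haj.le, hxa]
    rw [hx x hxa hxj]; simp [hxa]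
  rw [hf, Finset.prod_insert (by simp [ta])]
  congr 1
  · simp [ta]
  · refine Finset.prod_congr rfl fun x hxm => ?_
    rw [Finset.mem_filter] at hxm
    rw [Equiv.Perm.mul_apply, hx]
    · rintro rfl; simp [ta] at hxm
    · rintro rfl; simp [tj] at hxm

open Classical in
/-- The sum over pairings. -/
noncomputable def W [LinearOrder ι] (K : ι → ι → ℝ) (S : Finset ι) : ℝ :=
  ∑ σ ∈ Finset.univ.filter (IsPairing S),
    ∏ i ∈ Finset.univ.filter (fun i => i < σ i), K i (σ i)

lemma W_rec [LinearOrder ι] (K : ι → ι → ℝ) (S : Finset ι) (a : ι) (ha : a ∈ S)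
    (hmin : ∀ j ∈ S, a ≤ j) :
    W K S = ∑ j ∈ S.erase a, K a j * W K ((S.erase a).erase j) := by
  classical
  unfold W
  have hmaps : ∀ σ ∈ Finset.univ.filter (IsPairing S), σ a ∈ S.erase a := by
    intro σ hσ
    obtain ⟨h1, h2⟩ := (Finset.mem_filter.1 hσ).2
    refine Finset.mem_erase.2 ⟨(h2 a).2 ha, (h2 _).1 ?_⟩
    intro h
    exact (h2 a).2 ha (σ.injective h)
  rw [← Finset.sum_fiberwise_of_maps_to hmaps]
  refine Finset.sum_congr rfl fun j hj => ?_
  obtain ⟨hja, hjS⟩ := Finset.mem_erase.1 hj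
  rw [Finset.mul_sum]
  symm
  have inv : ∀ σ : Equiv.Perm ι, Equiv.swap a j * (Equiv.swap a j * σ) = σ := by
    intro σ; rw [← mul_assoc, Equiv.swap_mul_self, one_mul]
  refine Finset.sum_nbij' (fun τ => Equiv.swap a j * τ) (fun τ => Equiv.swap a j * τ)
    ?_ ?_ (fun τ _ => inv τ) (fun τ _ => inv τ) ?_
  · intro τ hτ
    have := (pairing_aux S a j ha hjS hja.symm τ).2 (by simpa using hτ)
    simpa using this
  · intro σ hσ
    have := (pairing_aux S a j ha hjS hja.symm (Equiv.swap a j * σ)).1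
      (by rw [inv]; simpa using hσ)
    simpa using this
  · intro τ hτ
    exact (pairing_prod K S a j (lt_of_le_of_ne (hmin j hjS) hja.symm) τ (by simpa using hτ)).symm

lemma W_empty [LinearOrder ι] (K : ι → ι → ℝ) : W K ∅ = 1 := by
  classical
  unfold W
  have : Finset.univ.filter (IsPairing (∅ : Finset ι)) = {1} := by
    ext σ
    simp only [Finset.mem_filter, Finset.mem_univ, true_and, Finset.mem_singleton, IsPairing]
    constructor
    · rintro ⟨-, h⟩
      ext x
      have := h x
      simp at this
      simpa using this
    · rintro rfl; simp
  rw [this]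
  simp

lemma wick_abstract [LinearOrder ι] (L : MvPolynomial ι ℝ →ₗ[ℝ] ℝ) (hL1 : L 1 = 1)
    (h0 : ∀ c, L (lin c) = 0)
    (h : ∀ (c : ι → ℝ) (m : ℕ), L (lin c ^ (m + 2)) = (m + 1) * L (lin c ^ 2) * L (lin c ^ m))
    (S : Finset ι) :
    L (∏ j ∈ S, X j) = W (fun i j => L (X i * X j)) S := by
  induction S using Finset.strongInduction with
  | H S ih =>
  rcases S.eq_empty_or_nonempty with rfl | hS
  · simp [W_empty, hL1]
  · have ha := S.min'_mem hS
    rw [W_rec _ S _ ha (fun j hj => S.min'_le j hj), ← Finset.mul_prod_erase S _ ha,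
      stein_prod L hL1 h0 h]
    refine Finset.sum_congr rfl fun j hj => ?_
    rw [ih]
    exact (Finset.erase_subset _ _).trans_ssubset (Finset.erase_ssubset ha)

/-! ### Integrability -/

lemma memLp_eval {Ω : Type*} [MeasurableSpace Ω] (P : Measure Ω) [IsProbabilityMeasure P]
    (Y : ι → Ω → ℝ) (hY : ∀ i (q : ENNReal), q ≠ ⊤ → MemLp (Y i) q P) (p : MvPolynomial ι ℝ) :
    ∀ q : ENNReal, q ≠ ⊤ → MemLp (fun ω => eval (fun i => Y i ω) p) q P := by
  induction p using MvPolynomial.induction_on with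
  | C a => intro q _; simpa using memLp_const a
  | add p r hp hr =>
    intro q hq
    simp only [map_add]
    exact (hp q hq).add (hr q hq)
  | mul_X p i hp =>
    intro q hq
    have hq2 : 2 * q ≠ ⊤ := ENNReal.mul_ne_top (by simp) hq
    have : ENNReal.HolderTriple (2 * q) (2 * q) q := ⟨by
      rw [ENNReal.mul_inv (by simp) (by simp), ← add_mul, ENNReal.inv_two_add_inv_two, one_mul]⟩
    have := MemLp.mul' (r := q) (hY i _ hq2) (hp _ hq2)
    simpa using this

end Wick

/-- Wick/Isserlis formula: If `Y₁, …, Y_{2n}` are jointly centered Gaussian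
real random variables (every real linear combination has a centered Gaussian law), then
`Y₁⋯Y_{2n}` is integrable and
`E[Y₁⋯Y_{2n}] = Σ_σ Π_{i < σ(i)} E[Y_i Y_{σ(i)}]`, the sum being over all fixed-point-free
involutive permutations (pairings) of `{1, …, 2n}`. -/
theorem stmt12 {Ω : Type*} [MeasurableSpace Ω] (P : Measure Ω) [IsProbabilityMeasure P]
    (n : ℕ) (hn : 1 ≤ n) (Y : Fin (2 * n) → Ω → ℝ)
    (hmeas : ∀ i, Measurable (Y i))
    (hgauss : ∀ c : Fin (2 * n) → ℝ, ∃ V : NNReal,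
      Measure.map (fun ω => ∑ i, c i * Y i ω) P = gaussianReal 0 V) :
    Integrable (fun ω => ∏ i, Y i ω) P ∧
    ∫ ω, ∏ i, Y i ω ∂P =
      ∑ σ ∈ Finset.univ.filter
          (fun σ : Equiv.Perm (Fin (2 * n)) => σ * σ = 1 ∧ ∀ i, σ i ≠ i),
        ∏ i ∈ Finset.univ.filter (fun i => i < σ i), ∫ ω, Y i ω * Y (σ i) ω ∂P := by
  classical
  have hY : ∀ i (q : ENNReal), q ≠ ⊤ → MemLp (Y i) q P := by
    intro i q hq
    obtain ⟨V, hV⟩ := hgauss (Pi.single i 1)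
    have e : (fun ω => ∑ j, (Pi.single i 1 : Fin (2 * n) → ℝ) j * Y j ω) = Y i := by
      funext ω; simp [Pi.single_apply]
    rw [e] at hV
    have := memLp_id_gaussianReal' (μ := 0) (v := V) q hq
    rw [← hV] at this
    exact (memLp_map_measure_iff aestronglyMeasurable_id (hmeas i).aemeasurable).1 this
  have hint : ∀ p : MvPolynomial (Fin (2 * n)) ℝ,
      Integrable (fun ω => MvPolynomial.eval (fun i => Y i ω) p) P := fun p =>
    memLp_one_iff_integrable.1 (Wick.memLp_eval P Y hY p 1 (by simp))
  let L : MvPolynomial (Fin (2 * n)) ℝ →ₗ[ℝ] ℝ :=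
    { toFun := fun p => ∫ ω, MvPolynomial.eval (fun i => Y i ω) p ∂P
      map_add' := fun p q => by
        simp only [map_add]
        exact integral_add (hint p) (hint q)
      map_smul' := fun a p => by
        simp only [MvPolynomial.smul_eval, RingHom.id_apply, smul_eq_mul]
        exact integral_const_mul _ _ }
  have hL : ∀ p, L p = ∫ ω, MvPolynomial.eval (fun i => Y i ω) p ∂P := fun p => rfl
  have hpow : ∀ c : Fin (2 * n) → ℝ, ∃ V : NNReal,
      ∀ m, L (Wick.lin c ^ m) = ∫ x, x ^ m ∂(gaussianReal 0 V) := by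
    intro c
    obtain ⟨V, hV⟩ := hgauss c
    refine ⟨V, fun m => ?_⟩
    have hm : Measurable (fun ω => ∑ i, c i * Y i ω) := by fun_prop
    rw [← hV, integral_map hm.aemeasurable (by fun_prop), hL]
    simp [Wick.lin, MvPolynomial.smul_eval]
  have hL1 : L 1 = 1 := by simp [hL]
  have h0 : ∀ c, L (Wick.lin c) = 0 := by
    intro c
    obtain ⟨V, hV⟩ := hpow c
    have := hV 1
    simpa using this
  have h2 : ∀ (c : Fin (2 * n) → ℝ) (m : ℕ), L (Wick.lin c ^ (m + 2)) =
      (m + 1) * L (Wick.lin c ^ 2) * L (Wick.lin c ^ m) := by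
    intro c m
    obtain ⟨V, hV⟩ := hpow c
    rw [hV, hV, hV, Wick.gaussian_moment, Wick.gaussian_moment V 0]
    simp
  refine ⟨by simpa [MvPolynomial.eval_prod] using hint (∏ i, MvPolynomial.X i), ?_⟩
  have key := Wick.wick_abstract L hL1 h0 h2 Finset.univ
  simp only [hL, MvPolynomial.eval_prod, MvPolynomial.eval_X, map_mul, Wick.W] at key
  rw [key]
  refine Finset.sum_congr ?_ fun _ _ => rfl
  ext σ
  simp [Wick.IsPairing]
end

section
/- Let α ∈ (1/2, 1) and let ({1,…,n}, E, A, L) be a pairing structure with n = a + 2e. Set w(k) := (1 + log⁺|k|) · |k|^{1-2α} for k ≠ 0, where log⁺ x = max(log x, 0). Define g : ℝ^A → [0, ∞] by g((k_m)_{m∈A}) := ∫_{ℝ^L} Π_{j=1}^n (1 + |S_j|)^{-1} Π_{p∈L} w(k_p) d(k_p)_{p∈L}. Then ∫_{ℝ^A} g((k_m)_{m∈A})² Π_{m∈A} w(k_m) d(k_m)_{m∈A} < ∞. -/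
open MeasureTheory

/-- A pairing structure on `{1, …, n}` is encoded by an involution `σ` of `Fin n`:
the free indices `A` are the fixed points, the set of left endpoints `L` is
`{j | j < σ j}`, and `(p, σ p)` with `p < σ p` are the pairs.  Given values
`kA` on `A` and `kL` on `L`, `combine σ hσ kA kL : Fin n → ℝ` is the vector `k̃` with
`k̃_j = kA_j` for `j ∈ A`, `k̃_j = kL_j` for `j ∈ L`, and `k̃_q = -kL_p` when `q = σ p`,
`p < q`. -/
noncomputable def combine {n : ℕ} (σ : Equiv.Perm (Fin n)) (hσ : ∀ j, σ (σ j) = j)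
    (kA : {j : Fin n // σ j = j} → ℝ) (kL : {j : Fin n // j < σ j} → ℝ) :
    Fin n → ℝ := fun j =>
  if h : σ j = j then kA ⟨j, h⟩
  else if h' : j < σ j then kL ⟨j, h'⟩
  else -kL ⟨σ j, by
    have h2 : σ j < j := lt_of_le_of_ne (not_lt.mp h') h
    rw [hσ j]; exact h2⟩

/-- The partial sums `S_j = k̃_1 + ⋯ + k̃_j`. -/
noncomputable def partialSum {n : ℕ} (k : Fin n → ℝ) (j : Fin n) : ℝ :=
  ∑ i ∈ Finset.Iic j, k i

/-- The weight. -/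
noncomputable def ww (α : ℝ) (k : ℝ) : ℝ := (1 + max (Real.log |k|) 0) * |k| ^ (1 - 2 * α)

lemma ww_nonneg (α k : ℝ) : 0 ≤ ww α k := by
  unfold ww; positivity

lemma ww_meas (α : ℝ) : Measurable (ww α) := by
  unfold ww
  fun_prop

lemma ww_mul_le (α : ℝ) (hα1 : 1 / 2 < α) (k s : ℝ) :
    ww α k * (1 + |k + s|)⁻¹ ≤
      (Set.Icc (-1 : ℝ) 1).indicator (fun k => |k| ^ (1 - 2 * α)) k +
      ((1 + 1 / (α - 1 / 2)) * 2 ^ (α - 1 / 2)) *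
        ((1 + ‖k‖) ^ (-(α + 1 / 2)) + (1 + ‖k + s‖) ^ (-(α + 1 / 2))) := by
  have hδ : 0 < α - 1 / 2 := by linarith
  have hv : (1 : ℝ) ≤ 1 + |k + s| := by linarith [abs_nonneg (k + s)]
  have hu : (1 : ℝ) ≤ 1 + |k| := by linarith [abs_nonneg k]
  have hvi : (1 + |k + s|)⁻¹ ≤ 1 := inv_le_one_of_one_le₀ hv
  by_cases hk : |k| ≤ 1
  · have hm : k ∈ Set.Icc (-1 : ℝ) 1 := abs_le.mp hk
    rw [Set.indicator_of_mem hm]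
    have h1 : ww α k = |k| ^ (1 - 2 * α) := by
      unfold ww
      rw [max_eq_right (Real.log_nonpos (abs_nonneg k) hk)]; simp
    have h2 : ww α k * (1 + |k + s|)⁻¹ ≤ ww α k := mul_le_of_le_one_right (ww_nonneg α k) hvi
    have h3 : 0 ≤ ((1 + 1 / (α - 1 / 2)) * 2 ^ (α - 1 / 2)) *
        ((1 + ‖k‖) ^ (-(α + 1 / 2)) + (1 + ‖k + s‖) ^ (-(α + 1 / 2))) := by positivity
    linarith
  · have hm : k ∉ Set.Icc (-1 : ℝ) 1 := fun h => hk (abs_le.mpr h)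
    rw [Set.indicator_of_notMem hm, zero_add]
    push Not at hk
    have hk0 : 0 < |k| := by linarith
    have h1 : ww α k ≤ (1 + 1 / (α - 1 / 2)) * |k| ^ (-(α - 1 / 2)) := by
      unfold ww
      rw [max_eq_left (Real.log_nonneg hk.le)]
      have hl := Real.log_le_rpow_div hk0.le hδ
      have h1 : (1 : ℝ) ≤ |k| ^ (α - 1 / 2) := Real.one_le_rpow hk.le hδ.le
      have : 1 + Real.log |k| ≤ (1 + 1 / (α - 1 / 2)) * |k| ^ (α - 1 / 2) := by
        have : (1 + 1 / (α - 1 / 2)) * |k| ^ (α - 1 / 2) =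
          |k| ^ (α - 1 / 2) + |k| ^ (α - 1 / 2) / (α - 1 / 2) := by ring
        linarith
      calc _ ≤ (1 + 1 / (α - 1 / 2)) * |k| ^ (α - 1 / 2) * |k| ^ (1 - 2 * α) := by gcongr
        _ = _ := by
          rw [mul_assoc, ← Real.rpow_add hk0]
          congr 2; ring
    have h2 : |k| ^ (-(α - 1 / 2)) ≤ 2 ^ (α - 1 / 2) * (1 + |k|) ^ (-(α - 1 / 2)) := by
      have : |k| ^ (-(α - 1 / 2)) ≤ ((1 + |k|) / 2) ^ (-(α - 1 / 2)) :=
        Real.rpow_le_rpow_of_nonpos (by linarith) (by linarith) (by linarith)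
      rw [Real.div_rpow (by linarith) (by norm_num), Real.rpow_neg (by norm_num : (0 : ℝ) ≤ 2),
        div_inv_eq_mul] at this
      linarith
    have h3 : (1 + |k|) ^ (-(α - 1 / 2)) * (1 + |k + s|)⁻¹ ≤
        (1 + |k|) ^ (-(α + 1 / 2)) + (1 + |k + s|) ^ (-(α + 1 / 2)) := by
      rcases le_total (1 + |k|) (1 + |k + s|) with h | h
      · have : (1 + |k|) ^ (-(α - 1 / 2)) * (1 + |k + s|)⁻¹ ≤ (1 + |k|) ^ (-(α + 1 / 2)) := by
          calc _ ≤ (1 + |k|) ^ (-(α - 1 / 2)) * (1 + |k|)⁻¹ := by gcongr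
            _ = _ := by
              rw [← Real.rpow_neg_one, ← Real.rpow_add (by linarith)]
              congr 1; ring
        have : 0 ≤ (1 + |k + s|) ^ (-(α + 1 / 2)) := by positivity
        linarith
      · have : (1 + |k|) ^ (-(α - 1 / 2)) * (1 + |k + s|)⁻¹ ≤ (1 + |k + s|) ^ (-(α + 1 / 2)) := by
          calc _ ≤ (1 + |k + s|) ^ (-(α - 1 / 2)) * (1 + |k + s|)⁻¹ := by
                have := Real.rpow_le_rpow_of_nonpos (by linarith) h
                  (by linarith : -(α - 1 / 2) ≤ 0)
                gcongr
            _ = _ := by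
              rw [← Real.rpow_neg_one, ← Real.rpow_add (by linarith)]
              congr 1; ring
        have : 0 ≤ (1 + |k|) ^ (-(α + 1 / 2)) := by positivity
        linarith
    have hc : 0 ≤ 1 + 1 / (α - 1 / 2) := by positivity
    calc _ ≤ (1 + 1 / (α - 1 / 2)) * (2 ^ (α - 1 / 2) * (1 + |k|) ^ (-(α - 1 / 2))) *
          (1 + |k + s|)⁻¹ := by
            gcongr
            exact h1.trans (by gcongr)
      _ = ((1 + 1 / (α - 1 / 2)) * 2 ^ (α - 1 / 2)) *
          ((1 + |k|) ^ (-(α - 1 / 2)) * (1 + |k + s|)⁻¹) := by ring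
      _ ≤ _ := by
        simp only [Real.norm_eq_abs]
        gcongr

lemma near_zero (α : ℝ) (hα2 : α < 1) :
    ∫⁻ k : ℝ, ENNReal.ofReal ((Set.Icc (-1 : ℝ) 1).indicator (fun k => |k| ^ (1 - 2 * α)) k)
      < ⊤ := by
  have h := intervalIntegral.intervalIntegrable_cpow' (a := -1) (b := 1)
    (r := ((1 - 2 * α : ℝ) : ℂ)) (by simp only [Complex.ofReal_re]; linarith)
  have h2 := h.norm
  rw [intervalIntegrable_iff_integrableOn_Icc_of_le (by norm_num)] at h2
  simp only [Complex.norm_cpow_real, Complex.norm_real, Real.norm_eq_abs] at h2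
  rw [← integrable_indicator_iff measurableSet_Icc] at h2
  exact h2.lintegral_lt_top

lemma exists_bound (α : ℝ) (hα1 : 1 / 2 < α) (hα2 : α < 1) :
    ∃ B : ENNReal, B < ⊤ ∧ ∀ s : ℝ,
      ∫⁻ k : ℝ, ENNReal.ofReal (ww α k * (1 + |k + s|)⁻¹) ≤ B := by
  set I := ∫⁻ k : ℝ, ENNReal.ofReal ((1 + ‖k‖) ^ (-(α + 1 / 2))) with hI
  have hIt : I < ⊤ := finite_integral_one_add_norm (by simp; linarith)
  set c := (1 + 1 / (α - 1 / 2)) * 2 ^ (α - 1 / 2)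
  have hc : 0 ≤ c := by
    have : 0 < α - 1 / 2 := by linarith
    positivity
  refine ⟨_ , ENNReal.add_lt_top.mpr ⟨near_zero α hα2,
    ENNReal.mul_lt_top (ENNReal.ofReal_lt_top (r := c)) (ENNReal.add_lt_top.mpr ⟨hIt, hIt⟩)⟩, ?_⟩
  intro s
  have hs : ∫⁻ k : ℝ, ENNReal.ofReal ((1 + ‖k + s‖) ^ (-(α + 1 / 2))) = I :=
    lintegral_add_right_eq_self (fun k : ℝ => ENNReal.ofReal ((1 + ‖k‖) ^ (-(α + 1 / 2)))) s
  calc _ ≤ ∫⁻ k : ℝ, (ENNReal.ofReal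
          ((Set.Icc (-1 : ℝ) 1).indicator (fun k => |k| ^ (1 - 2 * α)) k) +
        ENNReal.ofReal c * (ENNReal.ofReal ((1 + ‖k‖) ^ (-(α + 1 / 2))) +
          ENNReal.ofReal ((1 + ‖k + s‖) ^ (-(α + 1 / 2))))) := by
        refine lintegral_mono fun k => ?_
        rw [← ENNReal.ofReal_add (by positivity) (by positivity), ← ENNReal.ofReal_mul hc,
          ← ENNReal.ofReal_add
            (Set.indicator_nonneg (fun x _ => by positivity) k) (by positivity)]
        exact ENNReal.ofReal_le_ofReal (ww_mul_le α hα1 k s)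
    _ = _ := by
      rw [lintegral_add_right _ (by fun_prop), lintegral_const_mul _ (by fun_prop),
        lintegral_add_right _ (by fun_prop), hs]

lemma triangular {ι : Type*} [Fintype ι] [DecidableEq ι] {n : ℕ} (r : ι → Fin n) (α : ℝ)
    (B : ENNReal)
    (hB : ∀ s : ℝ, ∫⁻ k : ℝ, ENNReal.ofReal (ww α k * (1 + |k + s|)⁻¹) ≤ B)
    (hr : Function.Injective r)
    (F : ι → (ι → ℝ) → ℝ) (hF : ∀ j, Measurable (F j))
    (hdep : ∀ i j x t, r j ≤ r i → F j (Function.update x i t) = F j x) :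
    ∫⁻ k : ι → ℝ, ∏ j, ENNReal.ofReal (ww α (k j) * (1 + |k j + F j k|)⁻¹)
      ≤ B ^ Fintype.card ι := by
  have hm := ww_meas α
  have hφ : ∀ j, Measurable fun k : ι → ℝ =>
      ENNReal.ofReal (ww α (k j) * (1 + |k j + F j k|)⁻¹) := by
    intro j
    have := hF j
    fun_prop
  have key : ∀ s : Finset ι, ∀ x : ι → ℝ,
      (∫⋯∫⁻_s, (fun k => ∏ j ∈ s, ENNReal.ofReal (ww α (k j) * (1 + |k j + F j k|)⁻¹))
        ∂(fun _ => volume)) x ≤ B ^ s.card := by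
    intro s
    induction s using Finset.induction_on_max_value r with
    | empty => intro x; simp
    | insert i s his hmax ih =>
      intro x
      rw [lmarginal_insert' _ (Finset.measurable_prod _ fun j _ => hφ j) his,
        Finset.card_insert_of_notMem his]
      have hle : (fun x : ι → ℝ => ∫⁻ t : ℝ, ∏ j ∈ insert i s,
          ENNReal.ofReal (ww α ((Function.update x i t) j) *
            (1 + |(Function.update x i t) j + F j (Function.update x i t)|)⁻¹)) ≤
          fun x => B * ∏ j ∈ s, ENNReal.ofReal (ww α (x j) * (1 + |x j + F j x|)⁻¹) := by
        intro x
        have : ∀ t : ℝ, ∏ j ∈ insert i s,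
          ENNReal.ofReal (ww α ((Function.update x i t) j) *
            (1 + |(Function.update x i t) j + F j (Function.update x i t)|)⁻¹) =
            ENNReal.ofReal (ww α t * (1 + |t + F i x|)⁻¹) *
              ∏ j ∈ s, ENNReal.ofReal (ww α (x j) * (1 + |x j + F j x|)⁻¹) := by
          intro t
          rw [Finset.prod_insert his, hdep i i x t le_rfl]
          congr 1
          · simp
          · refine Finset.prod_congr rfl fun j hj => ?_
            have hne : j ≠ i := fun h => his (h ▸ hj)
            rw [hdep i j x t (hmax j hj), Function.update_of_ne hne]
        simp only [this]
        rw [lintegral_mul_const _ (by fun_prop)]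
        gcongr
        exact hB _
      refine (lmarginal_mono hle x).trans ?_
      have := ih x
      unfold lmarginal at this ⊢
      rw [lintegral_const_mul]
      · rw [pow_succ, mul_comm]
        gcongr
      · exact (Finset.measurable_prod _ fun j _ => hφ j).comp measurable_updateFinset
  have := key Finset.univ 0
  rw [lmarginal_univ] at this
  exact this

section main
variable {n : ℕ} (σ : Equiv.Perm (Fin n)) (hσ : ∀ j, σ (σ j) = j)

lemma combine_meas (j : Fin n) :
    Measurable fun p : ({j : Fin n // σ j = j} → ℝ) × ({j : Fin n // j < σ j} → ℝ) =>
      combine σ hσ p.1 p.2 j := by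
  unfold combine
  split_ifs <;> fun_prop

lemma partialSum_meas (j : Fin n) :
    Measurable fun p : ({j : Fin n // σ j = j} → ℝ) × ({j : Fin n // j < σ j} → ℝ) =>
      partialSum (combine σ hσ p.1 p.2) j := by
  unfold partialSum
  exact Finset.measurable_sum _ fun i _ => combine_meas σ hσ i

/-- sum of the entries strictly before `j`. -/
noncomputable def preSum {n : ℕ} (k : Fin n → ℝ) (j : Fin n) : ℝ := ∑ i ∈ Finset.Iio j, k i

lemma partialSum_eq (k : Fin n → ℝ) (j : Fin n) : partialSum k j = k j + preSum k j := by
  unfold partialSum preSum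
  rw [← Finset.Iio_insert, Finset.sum_insert (by simp)]

lemma preSum_meas (j : Fin n) :
    Measurable fun p : ({j : Fin n // σ j = j} → ℝ) × ({j : Fin n // j < σ j} → ℝ) =>
      preSum (combine σ hσ p.1 p.2) j := by
  unfold preSum
  exact Finset.measurable_sum _ fun i _ => combine_meas σ hσ i

lemma preSum_congr (kA kA' : {j : Fin n // σ j = j} → ℝ) (kL kL' : {j : Fin n // j < σ j} → ℝ)
    (j : Fin n) (hA : ∀ i, i.1 < j → kA i = kA' i) (hL : ∀ i, i.1 < j → kL i = kL' i) :
    preSum (combine σ hσ kA kL) j = preSum (combine σ hσ kA' kL') j := by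
  unfold preSum
  refine Finset.sum_congr rfl fun i hi => ?_
  rw [Finset.mem_Iio] at hi
  unfold combine
  split_ifs with h h'
  · exact hA _ hi
  · exact hL _ hi
  · rw [hL _ (lt_of_le_of_lt (not_lt.mp h') hi)]

lemma combine_A (kA : {j : Fin n // σ j = j} → ℝ) (kL : {j : Fin n // j < σ j} → ℝ)
    (i : {j : Fin n // σ j = j}) : combine σ hσ kA kL i.1 = kA i := by
  unfold combine; rw [dif_pos i.2]

lemma combine_L (kA : {j : Fin n // σ j = j} → ℝ) (kL : {j : Fin n // j < σ j} → ℝ)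
    (i : {j : Fin n // j < σ j}) : combine σ hσ kA kL i.1 = kL i := by
  unfold combine; rw [dif_neg i.2.ne', dif_pos i.2]

/-- Dropping the factors outside the range of an injection. -/
lemma drop_factors {ι : Type*} [Fintype ι] (r : ι → Fin n) (hr : Function.Injective r)
    (S : Fin n → ℝ) :
    ∏ j : Fin n, (1 + |S j|)⁻¹ ≤ ∏ i : ι, (1 + |S (r i)|)⁻¹ := by
  classical
  rw [← Finset.prod_image (s := Finset.univ) (g := r) (f := fun j => (1 + |S j|)⁻¹)
    (fun a _ b _ h => hr h)]
  rw [← Finset.prod_sdiff (Finset.subset_univ (Finset.univ.image r))]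
  refine mul_le_of_le_one_left (Finset.prod_nonneg fun i _ => by positivity) ?_
  refine Finset.prod_le_one (fun i _ => by positivity) fun i _ => ?_
  exact inv_le_one_of_one_le₀ (by linarith [abs_nonneg (S i)])

end main

/-- Let `α ∈ (1/2,1)` and let a pairing structure on `{1,…,n}` be given.
With `w(k) = (1 + log⁺|k|)|k|^{1-2α}` and
`g((k_m)_{m∈A}) = ∫_{ℝ^L} Π_{j=1}^n (1+|S_j|)⁻¹ Π_{p∈L} w(k_p) d(k_p)_{p∈L}`,
one has `∫_{ℝ^A} g² Π_{m∈A} w(k_m) d(k_m)_{m∈A} < ∞`. -/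
theorem stmt16 (α : ℝ) (hα1 : 1 / 2 < α) (hα2 : α < 1)
    (n : ℕ) (σ : Equiv.Perm (Fin n)) (hσ : ∀ j, σ (σ j) = j) :
    ∫⁻ kA : {j : Fin n // σ j = j} → ℝ,
      (∫⁻ kL : {j : Fin n // j < σ j} → ℝ,
          ENNReal.ofReal
            ((∏ j : Fin n, (1 + |partialSum (combine σ hσ kA kL) j|)⁻¹) *
              ∏ p : {j : Fin n // j < σ j},
                (1 + max (Real.log |kL p|) 0) * |kL p| ^ (1 - 2 * α))) ^ 2 *
        ∏ m : {j : Fin n // σ j = j},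
          ENNReal.ofReal ((1 + max (Real.log |kA m|) 0) * |kA m| ^ (1 - 2 * α))
      < ⊤ := by
  obtain ⟨B, hBt, hB⟩ := exists_bound α hα1 hα2
  have hw := ww_meas α
  change ∫⁻ kA : {j : Fin n // σ j = j} → ℝ,
      (∫⁻ kL : {j : Fin n // j < σ j} → ℝ,
          ENNReal.ofReal
            ((∏ j : Fin n, (1 + |partialSum (combine σ hσ kA kL) j|)⁻¹) *
              ∏ p : {j : Fin n // j < σ j}, ww α (kL p))) ^ 2 *
        ∏ m : {j : Fin n // σ j = j}, ENNReal.ofReal (ww α (kA m)) < ⊤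
  set g : ({j : Fin n // σ j = j} → ℝ) → ENNReal := fun kA =>
    ∫⁻ kL : {j : Fin n // j < σ j} → ℝ,
          ENNReal.ofReal
            ((∏ j : Fin n, (1 + |partialSum (combine σ hσ kA kL) j|)⁻¹) *
              ∏ p : {j : Fin n // j < σ j}, ww α (kL p)) with hg
  set e := Fintype.card {j : Fin n // j < σ j}
  have h1 : ∀ kA, g kA ≤ B ^ e := by
    intro kA
    refine le_trans ?_ (triangular (ι := {j : Fin n // j < σ j}) (fun j => j.1) α B hB
      Subtype.val_injective
      (fun j kL => preSum (combine σ hσ kA kL) j.1)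
      (fun j => (preSum_meas σ hσ j.1).comp (measurable_const.prodMk measurable_id)) ?_)
    · refine lintegral_mono fun kL => ?_
      rw [← ENNReal.ofReal_prod_of_nonneg
        (fun i _ => mul_nonneg (ww_nonneg _ _) (by positivity)), Finset.prod_mul_distrib, mul_comm]
      refine ENNReal.ofReal_le_ofReal (mul_le_mul_of_nonneg_left ?_
        (Finset.prod_nonneg fun i _ => ww_nonneg _ _))
      refine (drop_factors (fun j : {j : Fin n // j < σ j} => j.1) Subtype.val_injective _).trans
        (le_of_eq ?_)
      refine Finset.prod_congr rfl fun i _ => ?_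
      rw [partialSum_eq, combine_L]
    · intro i j x t hij
      refine preSum_congr σ hσ _ _ _ _ _ (fun _ _ => rfl) fun l hl => ?_
      refine Function.update_of_ne ?_ _ _
      rintro rfl
      exact absurd hl (not_lt.mpr hij)
  have hBe : B ^ e < ⊤ := ENNReal.pow_lt_top hBt
  set G : ({j : Fin n // σ j = j} → ℝ) × ({j : Fin n // j < σ j} → ℝ) → ENNReal := fun p =>
    ENNReal.ofReal
            ((∏ j : Fin n, (1 + |partialSum (combine σ hσ p.1 p.2) j|)⁻¹) *
              ∏ i : {j : Fin n // j < σ j}, ww α (p.2 i)) *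
      ∏ m : {j : Fin n // σ j = j}, ENNReal.ofReal (ww α (p.1 m)) with hG
  have hGm : Measurable G := by
    have := fun j => partialSum_meas σ hσ j
    rw [hG]
    fun_prop
  have h2 : ∫⁻ p, G p ≤
      B ^ Fintype.card ({j : Fin n // σ j = j} ⊕ {j : Fin n // j < σ j}) := by
    rw [← (volume_measurePreserving_sumPiEquivProdPi
      (fun _ : {j : Fin n // σ j = j} ⊕ {j : Fin n // j < σ j} => ℝ)).lintegral_comp hGm]
    have hinj : Function.Injective
        (Sum.elim (fun j : {j : Fin n // σ j = j} => j.1) (fun j : {j : Fin n // j < σ j} => j.1)) := by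
      refine Function.Injective.sumElim Subtype.val_injective Subtype.val_injective ?_
      intro a b h
      have := b.2
      rw [← h, a.2] at this
      exact lt_irrefl _ this
    refine le_trans ?_ (triangular
      (Sum.elim (fun j : {j : Fin n // σ j = j} => j.1) (fun j : {j : Fin n // j < σ j} => j.1))
      α B hB hinj
      (fun j k => preSum (combine σ hσ (fun i => k (Sum.inl i)) (fun i => k (Sum.inr i)))
        (Sum.elim (fun j : {j : Fin n // σ j = j} => j.1)
          (fun j : {j : Fin n // j < σ j} => j.1) j))
      (fun j => (preSum_meas σ hσ _).comp
        (g := fun p : ({j : Fin n // σ j = j} → ℝ) × ({j : Fin n // j < σ j} → ℝ) => _)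
        (f := fun k : {j : Fin n // σ j = j} ⊕ {j : Fin n // j < σ j} → ℝ =>
          ((fun i => k (Sum.inl i)), (fun i => k (Sum.inr i)))) (by fun_prop)) ?_)
    · refine lintegral_mono fun k => ?_
      change ENNReal.ofReal
            ((∏ j : Fin n, (1 + |partialSum (combine σ hσ (fun i => k (Sum.inl i))
                (fun i => k (Sum.inr i))) j|)⁻¹) *
              ∏ i : {j : Fin n // j < σ j}, ww α (k (Sum.inr i))) *
          ∏ m : {j : Fin n // σ j = j}, ENNReal.ofReal (ww α (k (Sum.inl m))) ≤ _
      rw [← ENNReal.ofReal_prod_of_nonneg (fun i _ => ww_nonneg _ _),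
        ← ENNReal.ofReal_mul' (Finset.prod_nonneg fun i _ => ww_nonneg _ _),
        ← ENNReal.ofReal_prod_of_nonneg
        (fun i _ => mul_nonneg (ww_nonneg _ _) (by positivity)), Finset.prod_mul_distrib,
        mul_assoc, mul_comm, Fintype.prod_sum_type (fun i => ww α (k i)), mul_comm (∏ i, ww α (k (Sum.inr i)))]
      refine ENNReal.ofReal_le_ofReal (mul_le_mul_of_nonneg_left ?_
        (mul_nonneg (Finset.prod_nonneg fun i _ => ww_nonneg _ _)
          (Finset.prod_nonneg fun i _ => ww_nonneg _ _)))
      refine (drop_factors _ hinj _).trans (le_of_eq ?_)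
      refine Finset.prod_congr rfl fun i _ => ?_
      rw [partialSum_eq]
      rcases i with i | i
      · simp only [Sum.elim_inl, combine_A]
      · simp only [Sum.elim_inr, combine_L]
    · intro i j x t hij
      refine preSum_congr σ hσ _ _ _ _ _ (fun l hl => ?_) fun l hl => ?_
      all_goals
        refine Function.update_of_ne ?_ _ _
        rintro rfl
        exact absurd hl (not_lt.mpr hij)
  calc _ ≤ ∫⁻ kA, B ^ e * ∫⁻ kL, G (kA, kL) := by
        refine lintegral_mono fun kA => ?_
        rw [hG]
        simp only
        rw [lintegral_mul_const' _ _ (ENNReal.prod_ne_top fun _ _ => ENNReal.ofReal_ne_top)]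
        rw [← mul_assoc, sq]
        gcongr
        exact h1 kA
    _ = B ^ e * ∫⁻ p, G p := by
        rw [lintegral_const_mul' _ _ hBe.ne, Measure.volume_eq_prod, lintegral_prod _ hGm.aemeasurable]
    _ < ⊤ := ENNReal.mul_lt_top hBe (h2.trans_lt (ENNReal.pow_lt_top hBt))
end

section
/- Let ({1,…,n}, E, A, L) be a pairing structure with n = a + 2e and let K > 0. For λ > 0 define f̃_λ : ℝ^A → [0, ∞] by f̃_λ((k_m)_{m∈A}) := ∫_{[-K,K]^L} Π_{j=1}^n (λ + |S_j|)^{-1} d(k_p)_{p∈L}. Then there exists a constant C > 0, depending only on n and K, such that for all λ ∈ (0,1], ∫_{[-K,K]^A} f̃_λ((k_m)_{m∈A})² d(k_m)_{m∈A} ≤ C λ^{-n} (1 + log(1/λ))ⁿ. -/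
open MeasureTheory

theorem one_dim (M : ℝ) (hM : 0 < M) : ∃ C > (0:ℝ), ∀ l ∈ Set.Ioc (0:ℝ) 1,
    Integrable ((Set.Icc (-M) M).indicator (fun y : ℝ => (l + |y|)⁻¹)) ∧
    ∫ y, (Set.Icc (-M) M).indicator (fun y : ℝ => (l + |y|)⁻¹) y ≤
      C * (1 + Real.log (1 / l)) := by
  have hlogM : 0 ≤ Real.log (1 + M) := Real.log_nonneg (by linarith)
  refine ⟨2 * (1 + Real.log (1 + M)), by positivity, ?_⟩
  rintro l ⟨hl0, hl1⟩
  have hpos : ∀ y : ℝ, 0 < l + |y| := fun y => by positivity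
  have hcont : Continuous (fun y : ℝ => (l + |y|)⁻¹) :=
    Continuous.inv₀ (by fun_prop) (fun y => (hpos y).ne')
  refine ⟨(hcont.continuousOn.integrableOn_compact isCompact_Icc).integrable_indicator
    measurableSet_Icc, ?_⟩
  rw [integral_indicator measurableSet_Icc]
  rw [integral_Icc_eq_integral_Ioc, ← intervalIntegral.integral_of_le (by linarith),
    ← intervalIntegral.integral_add_adjacent_intervals (b := 0)
      (hcont.intervalIntegrable _ _) (hcont.intervalIntegrable _ _)]
  have h1 : ∫ y in (-M)..0, (l + |y|)⁻¹ = ∫ y in (0:ℝ)..M, (l + |y|)⁻¹ := by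
    have := intervalIntegral.integral_comp_neg (a := 0) (b := M) (fun y : ℝ => (l + |y|)⁻¹)
    simp only [abs_neg, neg_zero] at this
    exact this.symm
  have h2 : ∫ y in (0:ℝ)..M, (l + |y|)⁻¹ = Real.log ((l + M) / l) := by
    have h3 : ∫ y in (0:ℝ)..M, (l + |y|)⁻¹ = ∫ y in (0:ℝ)..M, (l + y)⁻¹ := by
      apply intervalIntegral.integral_congr
      intro y hy
      rw [Set.uIcc_of_le hM.le] at hy
      simp [abs_of_nonneg hy.1]
    rw [h3, intervalIntegral.integral_comp_add_left (fun y : ℝ => y⁻¹) l, add_zero,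
      integral_inv_of_pos hl0 (by linarith)]
  rw [h1, h2, Real.log_div (by positivity) hl0.ne', one_div, Real.log_inv]
  have h4 : Real.log (l + M) ≤ Real.log (1 + M) := Real.log_le_log (by linarith) (by linarith)
  have h5 : Real.log l ≤ 0 := Real.log_nonpos hl0.le hl1
  nlinarith

theorem key_bound {E : Type} [NormedAddCommGroup E] [NormedSpace ℝ E] [FiniteDimensional ℝ E]
    [MeasurableSpace E] [BorelSpace E] (μ : Measure E) [μ.IsAddHaarMeasure]
    {κ : Type} [Fintype κ] (f : κ → E →ₗ[ℝ] ℝ)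
    (hsep : ∀ x, (∀ k, f k x = 0) → x = 0) (d : ℕ) (hd : Module.finrank ℝ E = d)
    (hcard : Fintype.card κ = d + d) (B : Set E) (hBm : MeasurableSet B)
    (hB : Bornology.IsBounded B) :
    ∃ C > (0:ℝ), ∀ l ∈ Set.Ioc (0:ℝ) 1,
      ∫⁻ x in B, ENNReal.ofReal (∏ k, (l + |f k x|)⁻¹) ∂μ ≤
        ENNReal.ofReal (C * (l ^ d)⁻¹ * (1 + Real.log (1 / l)) ^ d) := by
  classical
  obtain ⟨ι, a, ha, hspan, hli⟩ := exists_linearIndependent' ℝ f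
  have : Finite ι := Finite.of_injective a ha
  have := Fintype.ofFinite ι
  let T : E →ₗ[ℝ] (ι → ℝ) := LinearMap.pi (f ∘ a)
  have hT : Function.Injective T := by
    rw [← LinearMap.ker_eq_bot, LinearMap.ker_eq_bot']
    intro x hx
    apply hsep
    intro k
    have hk : f k ∈ Submodule.span ℝ (Set.range (f ∘ a)) := by
      rw [hspan]; exact Submodule.subset_span ⟨k, rfl⟩
    have hle : Submodule.span ℝ (Set.range (f ∘ a)) ≤
        LinearMap.ker (LinearMap.applyₗ (R := ℝ) (M₂ := ℝ) x) := by
      rw [Submodule.span_le]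
      rintro _ ⟨i, rfl⟩
      exact congrFun hx i
    exact hle hk
  have hcι : Fintype.card ι = d := by
    apply le_antisymm
    · have := hli.fintype_card_le_finrank
      rwa [show Module.finrank ℝ (E →ₗ[ℝ] ℝ) = d from by
        rw [← hd]; exact Subspace.dual_finrank_eq] at this
    · have := LinearMap.finrank_le_finrank_of_injective hT
      rwa [hd, Module.finrank_fintype_fun_eq_card] at this
  let e : E ≃L[ℝ] (ι → ℝ) := (T.linearEquivOfInjective hT
    (by rw [hd, Module.finrank_fintype_fun_eq_card, hcι])).toContinuousLinearEquiv
  have he : ∀ x i, e x i = f (a i) x := fun x i => rfl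
  obtain ⟨M, hM, hMB⟩ : ∃ M > (0:ℝ), ∀ x ∈ B, ∀ i, |e x i| ≤ M := by
    have h1 : Bornology.IsBounded (e '' B) := e.lipschitz.isBounded_image hB
    obtain ⟨M, hM, h⟩ := h1.exists_pos_norm_le
    refine ⟨M, hM, fun x hx i => ?_⟩
    have := (norm_le_pi_norm (e x) i).trans (h _ ⟨x, hx, rfl⟩)
    simpa using this
  obtain ⟨C, hC, hC1⟩ := one_dim M hM
  set c : NNReal := Measure.addHaarScalarFactor (μ.map e) volume with hc
  have hmap : μ.map e = c • (volume : Measure (ι → ℝ)) := Measure.isAddLeftInvariant_eq_smul _ _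
  refine ⟨((c : ℝ) + 1) * C ^ d, by positivity, ?_⟩
  intro l hl
  obtain ⟨hint, hle⟩ := hC1 l hl
  obtain ⟨hl0, hl1⟩ := hl
  set h : ℝ → ℝ := (Set.Icc (-M) M).indicator (fun y : ℝ => (l + |y|)⁻¹) with hh
  have hh0 : ∀ y, 0 ≤ h y := fun y => Set.indicator_nonneg (fun y _ => by positivity) y
  have hL : 0 ≤ Real.log (1 / l) := Real.log_nonneg (by rw [one_div]; exact (one_le_inv₀ hl0).2 hl1)
  have hpt : ∀ x ∈ B, ∏ k, (l + |f k x|)⁻¹ ≤ (l ^ d)⁻¹ * ∏ i, h (e x i) := by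
    intro x hx
    rw [← Finset.prod_mul_prod_compl (Finset.univ.image a), mul_comm]
    have h1 : ∏ k ∈ Finset.univ.image a, (l + |f k x|)⁻¹ = ∏ i, h (e x i) := by
      rw [Finset.prod_image (fun i _ j _ hij => ha hij)]
      refine Finset.prod_congr rfl fun i _ => ?_
      rw [hh, Set.indicator_of_mem (Set.mem_Icc.2 (abs_le.1 (hMB x hx i))), he]
    have h2 : ∏ k ∈ (Finset.univ.image a)ᶜ, (l + |f k x|)⁻¹ ≤ (l ^ d)⁻¹ := by
      have : ((Finset.univ.image a)ᶜ).card = d := by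
        rw [Finset.card_compl, Finset.card_image_of_injective _ ha, Finset.card_univ, hcard, hcι]
        omega
      rw [← inv_pow, ← this, ← Finset.prod_const]
      refine Finset.prod_le_prod (fun k _ => by positivity) fun k _ => ?_
      exact inv_anti₀ hl0 (by linarith [abs_nonneg (f k x)])
    rw [h1]
    exact mul_le_mul_of_nonneg_right h2 (Finset.prod_nonneg fun i _ => hh0 _)
  have hhm : Measurable h := Measurable.indicator (by fun_prop) measurableSet_Icc
  have hFi : Integrable (fun y : ι → ℝ => ∏ i, h (y i)) :=
    Integrable.fintype_prod (f := fun _ => h) (fun _ => hint)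
  calc ∫⁻ x in B, ENNReal.ofReal (∏ k, (l + |f k x|)⁻¹) ∂μ
      ≤ ∫⁻ x in B, ENNReal.ofReal ((l ^ d)⁻¹ * ∏ i, h (e x i)) ∂μ :=
        setLIntegral_mono' hBm fun x hx => ENNReal.ofReal_le_ofReal (hpt x hx)
    _ ≤ ∫⁻ x, ENNReal.ofReal ((l ^ d)⁻¹ * ∏ i, h (e x i)) ∂μ := setLIntegral_le_lintegral _ _
    _ = ∫⁻ y, ENNReal.ofReal ((l ^ d)⁻¹ * ∏ i, h (y i)) ∂(μ.map e) := by
        rw [lintegral_map (by fun_prop) e.continuous.measurable]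
    _ = c * ENNReal.ofReal ((l ^ d)⁻¹ * (∫ y, h y) ^ d) := by
        rw [hmap, lintegral_smul_measure, ← ofReal_integral_eq_lintegral_ofReal
          (hFi.const_mul _) (Filter.Eventually.of_forall fun y =>
            mul_nonneg (by positivity) (Finset.prod_nonneg fun i _ => hh0 _)),
          integral_const_mul, integral_fintype_prod_volume_eq_pow, hcι]
        rfl
    _ ≤ _ := by
        rw [← ENNReal.ofReal_coe_nnreal, ← ENNReal.ofReal_mul (by positivity)]
        apply ENNReal.ofReal_le_ofReal
        have h3 : (∫ y, h y) ^ d ≤ (C * (1 + Real.log (1 / l))) ^ d :=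
          pow_le_pow_left₀ (integral_nonneg hh0) hle d
        calc (c:ℝ) * ((l ^ d)⁻¹ * (∫ y, h y) ^ d)
            ≤ ((c:ℝ) + 1) * ((l ^ d)⁻¹ * (C * (1 + Real.log (1 / l))) ^ d) := by
              have h4 : 0 ≤ (∫ y, h y) ^ d := pow_nonneg (integral_nonneg hh0) d
              gcongr
              linarith
          _ = _ := by rw [mul_pow]; ring

theorem sq_tonelli {α β : Type} [MeasurableSpace α] [MeasurableSpace β]
    (μ : Measure α) (ν : Measure β) [SFinite μ] [SFinite ν] (g : α × β → ENNReal)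
    (hg : Measurable g) :
    ∫⁻ x, (∫⁻ y, g (x, y) ∂ν) ^ 2 ∂μ =
      ∫⁻ p, g (p.1, p.2.1) * g (p.1, p.2.2) ∂(μ.prod (ν.prod ν)) := by
  rw [lintegral_prod _ (by fun_prop)]
  refine lintegral_congr fun x => ?_
  have hx : Measurable fun y => g (x, y) := by fun_prop
  rw [sq]
  exact (lintegral_prod_mul hx.aemeasurable hx.aemeasurable).symm

section
variable {n : ℕ} (σ : Equiv.Perm (Fin n)) (hσ : ∀ j, σ (σ j) = j)

/-- the partial sum as a linear form -/
noncomputable def psLin (j : Fin n) :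
    (({j : Fin n // σ j = j} → ℝ) × ({j : Fin n // j < σ j} → ℝ)) →ₗ[ℝ] ℝ :=
  IsLinearMap.mk' (fun p => partialSum (combine σ hσ p.1 p.2) j) (by
    constructor
    · intro x y
      simp only [partialSum, ← Finset.sum_add_distrib]
      refine Finset.sum_congr rfl fun i _ => ?_
      simp only [combine]
      split_ifs <;> simp <;> ring
    · intro c x
      simp only [partialSum, smul_eq_mul, Finset.mul_sum]
      refine Finset.sum_congr rfl fun i _ => ?_
      simp only [combine]
      split_ifs <;> simp)

theorem partialSum_eq_zero (k : Fin n → ℝ) (h : ∀ j, partialSum k j = 0) : k = 0 := by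
  funext j
  induction j using WellFoundedLT.induction with
  | ind j ih =>
    have h1 := h j
    rw [partialSum, Finset.sum_eq_single_of_mem j (by simp)] at h1
    · exact h1
    · intro i hi hij
      exact ih i (lt_of_le_of_ne (Finset.mem_Iic.1 hi) hij)

theorem psLin_sep (p : ({j : Fin n // σ j = j} → ℝ) × ({j : Fin n // j < σ j} → ℝ))
    (h : ∀ j, psLin σ hσ j p = 0) : p = 0 := by
  have h0 := partialSum_eq_zero (combine σ hσ p.1 p.2) h
  ext i
  · have := congrFun h0 i.1
    simpa [combine, i.2] using this
  · have := congrFun h0 i.1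
    simpa [combine, i.2, i.2.ne'] using this

end

theorem card_eq {n : ℕ} (σ : Equiv.Perm (Fin n)) (hσ : ∀ j, σ (σ j) = j) : Fintype.card {j : Fin n // σ j = j} +
    (Fintype.card {j : Fin n // j < σ j} + Fintype.card {j : Fin n // j < σ j}) = n := by
  have h1 : Fintype.card {j : Fin n // j < σ j} = Fintype.card {j : Fin n // σ j < j} :=
    Fintype.card_congr (σ.subtypeEquiv fun j => by rw [hσ])
  nth_rewrite 2 [h1]
  simp only [Fintype.card_subtype]
  rw [← Finset.card_union_of_disjoint, ← Finset.card_union_of_disjoint]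
  · conv_rhs => rw [← Fintype.card_fin n, ← Finset.card_univ]
    congr 1
    ext j
    simp only [Finset.mem_union, Finset.mem_filter, Finset.mem_univ, true_and, iff_true]
    rcases lt_trichotomy j (σ j) with h | h | h
    · exact .inr (.inl h)
    · exact .inl h.symm
    · exact .inr (.inr h)
  · rw [Finset.disjoint_left]
    intro j hj
    simp only [Finset.mem_union, Finset.mem_filter, Finset.mem_univ, true_and] at hj ⊢
    simp [hj]
  · rw [Finset.disjoint_left]
    intro j hj
    simp only [Finset.mem_filter, Finset.mem_univ, true_and] at hj ⊢
    exact hj.le.not_gt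

/-- Let a pairing structure on `{1,…,n}` and `K > 0` be given. For `λ > 0`
let `f̃_λ((k_m)_{m∈A}) = ∫_{[-K,K]^L} Π_{j=1}^n (λ+|S_j|)⁻¹ d(k_p)_{p∈L}`. Then there is a
constant `C > 0`, depending only on `n` and `K`, such that for all `λ ∈ (0,1]`,
`∫_{[-K,K]^A} f̃_λ² d(k_m)_{m∈A} ≤ C λ^{-n} (1 + log(1/λ))ⁿ`. -/
theorem stmt17 (n : ℕ) (σ : Equiv.Perm (Fin n)) (hσ : ∀ j, σ (σ j) = j)
    (K : ℝ) (hK : 0 < K) :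
    ∃ C > (0:ℝ), ∀ l ∈ Set.Ioc (0:ℝ) 1,
      ∫⁻ kA : {j : Fin n // σ j = j} → ℝ in
          Set.univ.pi (fun _ => Set.Icc (-K) K),
        (∫⁻ kL : {j : Fin n // j < σ j} → ℝ in
            Set.univ.pi (fun _ => Set.Icc (-K) K),
          ENNReal.ofReal
            (∏ j : Fin n, (l + |partialSum (combine σ hσ kA kL) j|)⁻¹)) ^ 2
      ≤ ENNReal.ofReal (C * (l ^ n)⁻¹ * (1 + Real.log (1 / l)) ^ n) := by
  set A := {j : Fin n // σ j = j} with hA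
  set L := {j : Fin n // j < σ j} with hL
  set BA : Set (A → ℝ) := Set.univ.pi (fun _ => Set.Icc (-K) K) with hBA
  set BL : Set (L → ℝ) := Set.univ.pi (fun _ => Set.Icc (-K) K) with hBL
  have hcA : IsCompact BA := isCompact_univ_pi fun _ => isCompact_Icc
  have hcL : IsCompact BL := isCompact_univ_pi fun _ => isCompact_Icc
  have hcB : IsCompact (BA ×ˢ (BL ×ˢ BL)) := hcA.prod (hcL.prod hcL)
  let f : Fin n ⊕ Fin n → ((A → ℝ) × ((L → ℝ) × (L → ℝ))) →ₗ[ℝ] ℝ := Sum.elim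
    (fun j => psLin σ hσ j ∘ₗ (LinearMap.fst ℝ _ _).prod
      (LinearMap.fst ℝ _ _ ∘ₗ LinearMap.snd ℝ _ _))
    (fun j => psLin σ hσ j ∘ₗ (LinearMap.fst ℝ _ _).prod
      (LinearMap.snd ℝ _ _ ∘ₗ LinearMap.snd ℝ _ _))
  have hf1 : ∀ j p, f (Sum.inl j) p = partialSum (combine σ hσ p.1 p.2.1) j := fun _ _ => rfl
  have hf2 : ∀ j p, f (Sum.inr j) p = partialSum (combine σ hσ p.1 p.2.2) j := fun _ _ => rfl
  have hps : ∀ j, Continuous fun p : (A → ℝ) × (L → ℝ) =>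
      partialSum (combine σ hσ p.1 p.2) j := fun j =>
    (psLin σ hσ j).continuous_of_finiteDimensional
  have i1 : (volume : Measure (A → ℝ)).IsAddHaarMeasure := inferInstance
  have i2 : (volume : Measure (L → ℝ)).IsAddHaarMeasure := inferInstance
  have i3 : ((volume : Measure (L → ℝ)).prod (volume : Measure (L → ℝ))).IsAddHaarMeasure :=
    Measure.prod.instIsAddHaarMeasure _ _
  have i4 : ((volume : Measure (A → ℝ)).prod ((volume : Measure (L → ℝ)).prod
      (volume : Measure (L → ℝ)))).IsAddHaarMeasure :=
    Measure.prod.instIsAddHaarMeasure _ _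
  obtain ⟨C, hC, hmain⟩ := key_bound 
    ((volume : Measure (A → ℝ)).prod ((volume : Measure (L → ℝ)).prod (volume : Measure (L → ℝ)))) f
    (by
      rintro ⟨x, y, z⟩ h
      have h1 := psLin_sep σ hσ (x, y) fun j => h (Sum.inl j)
      have h2 := psLin_sep σ hσ (x, z) fun j => h (Sum.inr j)
      rw [Prod.mk_eq_zero] at h1 h2
      rw [h1.1, h1.2, h2.2]; rfl)
    n
    (by
      rw [Module.finrank_prod, Module.finrank_prod, Module.finrank_fintype_fun_eq_card,
        Module.finrank_fintype_fun_eq_card]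
      exact card_eq σ hσ)
    (by simp) (BA ×ˢ (BL ×ˢ BL)) hcB.measurableSet hcB.isBounded
  refine ⟨C, hC, fun l hl => ?_⟩
  refine le_of_eq_of_le ?_ (hmain l hl)
  have hl0 : 0 < l := hl.1
  have hG : Continuous fun p : (A → ℝ) × (L → ℝ) =>
      (∏ j : Fin n, (l + |partialSum (combine σ hσ p.1 p.2) j|)⁻¹) :=
    continuous_finsetProd _ fun j _ =>
      Continuous.inv₀ (continuous_const.add (hps j).abs) fun p => by positivity
  have hGm : Measurable fun p : (A → ℝ) × (L → ℝ) =>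
      ENNReal.ofReal (∏ j : Fin n, (l + |partialSum (combine σ hσ p.1 p.2) j|)⁻¹) :=
    hG.measurable.ennreal_ofReal
  have hsplit : ∀ p : (A → ℝ) × ((L → ℝ) × (L → ℝ)),
      ENNReal.ofReal (∏ k, (l + |f k p|)⁻¹) =
      ENNReal.ofReal (∏ j : Fin n, (l + |partialSum (combine σ hσ p.1 p.2.1) j|)⁻¹) *
      ENNReal.ofReal (∏ j : Fin n, (l + |partialSum (combine σ hσ p.1 p.2.2) j|)⁻¹) := by
    intro p
    rw [← ENNReal.ofReal_mul (Finset.prod_nonneg fun j _ => by positivity),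
      Fintype.prod_sum_type]
    rfl
  simp_rw [hsplit]
  rw [← Measure.prod_restrict, ← Measure.prod_restrict]
  exact sq_tonelli (volume.restrict BA) (volume.restrict BL) _ hGm
end
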